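/- Let K be a real quadratic field whose maximal order (ring of integers) is unit-generated, i.e., generated as a ℤ-module by its group of units. Then K is of narrow Richaud–Degert type: its fundamental radicand D₀ (the squarefree integer with K = ℚ(√D₀)) satisfies D₀ = m² + r for some integers m ≥ 1 and r ∈ {1, −1, 4, −4}. -/

import Mathlib

noncomputable section

/-- `x` is a unit of the subring `O` of `ℝ`. -/
def IsUnitOf (O : Subring ℝ) (x : ℝ) : Prop := x ∈ O ∧ ∃ y ∈ O, x * y = 1

/-- `O` is an order of the subfield `K` of `ℝ`: a subring of the ring of integers of `K`
that is a free `ℤ`-module of rank 2 with fraction field `K`. -/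
def IsOrderOf (K : Subfield ℝ) (O : Subring ℝ) : Prop :=
  (O : Set ℝ) ⊆ K ∧ (∀ x ∈ O, IsIntegral ℤ x) ∧
    Module.Free ℤ O ∧ Module.finrank ℤ O = 2 ∧
    ∀ x ∈ K, ∃ p ∈ O, ∃ q ∈ O, q ≠ 0 ∧ x = p / q

/-- A subring `O` of `ℝ` is unit-generated if it is generated, as a `ℤ`-module
(equivalently, as an additive group), by its set of units. -/
def IsUnitGenerated (O : Subring ℝ) : Prop :=
  AddSubgroup.closure {x : ℝ | IsUnitOf O x} = O.toAddSubgroup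

/-- `K` is a real quadratic field: `K = ℚ(√D)` for a positive nonsquare integer `D`. -/
def IsRealQuadratic (K : Subfield ℝ) : Prop :=
  ∃ D : ℤ, 0 < D ∧ ¬ IsSquare D ∧ K = Subfield.closure {Real.sqrt D}

/-- The ring of integers (maximal order) of a subfield `K` of `ℝ`: the elements of `K`
that are integral over `ℤ`. -/
def ringOfIntegers (K : Subfield ℝ) : Subring ℝ :=
  (integralClosure ℤ ℝ).toSubring ⊓ K.toSubring

/-!
A unit `x` of the ring of integers `𝓞` of `ℚ(√D)` satisfies `x² = t x - N` with `t ∈ ℤ` and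
`N = ±1`, its trace and norm. If `√D` is a sum of units, then there is a least unit `e > 1`: units
other than `±1` must exist, and a unit in `(1, y]` is the larger root of one of finitely many
polynomials `X² - t X + N`. Every unit is then `± eⁿ` with `n ∈ ℤ`, hence lies in `ℤ[e] = ℤ + ℤ e`,
and so does `√D`. Writing `√D = p + q e` and comparing discriminants gives `q² (t² - 4 N) = 4 D`.
As `D` is squarefree, `q = ±1` or `q = ±2`: in the first case `t` is even and `D = (t / 2)² - N`,
in the second `D = t² - 4 N`.
-/

namespace IsUnitOf

variable {O : Subring ℝ} {x y : ℝ}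

lemma ne_zero (hx : IsUnitOf O x) : x ≠ 0 := by
  rintro rfl
  obtain ⟨-, y, -, h⟩ := hx
  simp at h

lemma neg (hx : IsUnitOf O x) : IsUnitOf O (-x) := by
  obtain ⟨hxO, y, hyO, hxy⟩ := hx
  exact ⟨neg_mem hxO, -y, neg_mem hyO, by rw [neg_mul_neg, hxy]⟩

lemma inv (hx : IsUnitOf O x) : IsUnitOf O x⁻¹ := by
  obtain ⟨hxO, y, hyO, hxy⟩ := hx
  rw [inv_eq_of_mul_eq_one_right hxy]
  exact ⟨hyO, x, hxO, by rw [mul_comm, hxy]⟩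

lemma mul (hx : IsUnitOf O x) (hy : IsUnitOf O y) : IsUnitOf O (x * y) := by
  obtain ⟨hxO, x', hxO', hxx'⟩ := hx
  obtain ⟨hyO, y', hyO', hyy'⟩ := hy
  exact ⟨mul_mem hxO hyO, x' * y', mul_mem hxO' hyO', by
    rw [mul_mul_mul_comm, hxx', hyy', one_mul]⟩

lemma pow (hx : IsUnitOf O x) (n : ℕ) : IsUnitOf O (x ^ n) := by
  obtain ⟨hxO, y, hyO, hxy⟩ := hx
  exact ⟨pow_mem hxO n, y ^ n, pow_mem hyO n, by rw [← mul_pow, hxy, one_pow]⟩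

lemma zpow (hx : IsUnitOf O x) : ∀ n : ℤ, IsUnitOf O (x ^ n)
  | .ofNat n => by simpa using hx.pow n
  | .negSucc n => by simpa using (hx.pow (n + 1)).inv

lemma exists_eq_zpow_of_isLeast {e : ℝ} (he : IsLeast {y | IsUnitOf O y ∧ 1 < y} e)
    (hx : IsUnitOf O x) (hx_pos : 0 < x) : ∃ n : ℤ, x = e ^ n := by
  obtain ⟨⟨heO, he_one⟩, he_le⟩ := he
  obtain ⟨n, hn_le, hn_lt⟩ := exists_mem_Ico_zpow hx_pos he_one
  have hn_pos : 0 < e ^ n := zpow_pos (by linarith) n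
  refine ⟨n, hn_le.antisymm' (not_lt.1 fun hlt ↦ ?_)⟩
  have he_le_div : e ≤ x / e ^ n :=
    he_le ⟨div_eq_mul_inv x (e ^ n) ▸ hx.mul (heO.zpow n).inv, (one_lt_div hn_pos).2 hlt⟩
  rw [le_div_iff₀ hn_pos, ← zpow_one_add₀ heO.ne_zero, add_comm] at he_le_div
  exact hn_lt.not_ge he_le_div

end IsUnitOf

lemma isUnitOf_range_of_isUnit {R : Type*} [Ring R] (f : R →+* ℝ) {z : R} (hz : IsUnit z) :
    IsUnitOf f.range (f z) := by
  obtain ⟨w, hzw⟩ := hz.exists_right_inv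
  exact ⟨⟨z, rfl⟩, f w, ⟨w, rfl⟩, by rw [← map_mul, hzw, map_one]⟩

section UnitGroup

variable {O : Subring ℝ}

lemma closure_isUnitOf_le_of_pos {M : AddSubgroup ℝ} (h : ∀ x, IsUnitOf O x → 0 < x → x ∈ M) :
    AddSubgroup.closure {x | IsUnitOf O x} ≤ M := by
  rw [AddSubgroup.closure_le]
  intro x hx
  rcases hx.ne_zero.lt_or_gt with hneg | hpos
  · simpa using h (-x) hx.neg (neg_pos.2 hneg)
  · exact h x hx hpos

lemma closure_isUnitOf_le_of_isLeast {M : Subring ℝ} {e : ℝ}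
    (he : IsLeast {y | IsUnitOf O y ∧ 1 < y} e) (heM : IsUnitOf M e) :
    AddSubgroup.closure {x | IsUnitOf O x} ≤ M.toAddSubgroup :=
  closure_isUnitOf_le_of_pos fun x hx hx_pos ↦ by
    obtain ⟨n, rfl⟩ := hx.exists_eq_zpow_of_isLeast he hx_pos
    exact (heM.zpow n).1

lemma exists_isUnitOf_one_lt_of_irrational_mem_closure {x : ℝ} (hx : Irrational x)
    (hxO : x ∈ AddSubgroup.closure {y | IsUnitOf O y}) : ∃ y, IsUnitOf O y ∧ 1 < y := by
  by_contra! h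
  have hle : AddSubgroup.closure {y | IsUnitOf O y} ≤ (Int.castAddHom ℝ).range :=
    closure_isUnitOf_le_of_pos fun y hy hy_pos ↦ by
      have hy_one : y = 1 := (h y hy).antisymm ((inv_le_one₀ hy_pos).1 (h _ hy.inv))
      exact ⟨1, by simp [hy_one]⟩
  obtain ⟨k, rfl⟩ := hle hxO
  exact hx.ne_int k rfl

end UnitGroup

section QuadraticAlgebra

variable {R : Type*} [CommRing R] {a b : R} {z : QuadraticAlgebra R a b}

lemma isIntegral_quadraticAlgebra_trace (hz : IsIntegral ℤ z) : IsIntegral ℤ z.trace := by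
  rw [← isIntegral_algebraMap_iff (QuadraticAlgebra.algebraMap_injective (a := a) (b := b)),
    QuadraticAlgebra.algebraMap_trace_eq_add_star]
  exact hz.add (map_isIntegral_int (starRingEnd (QuadraticAlgebra R a b)) hz)

lemma isIntegral_quadraticAlgebra_norm (hz : IsIntegral ℤ z) : IsIntegral ℤ z.norm := by
  rw [← isIntegral_algebraMap_iff (QuadraticAlgebra.algebraMap_injective (a := a) (b := b)),
    QuadraticAlgebra.algebraMap_norm_eq_mul_star]
  exact hz.mul (map_isIntegral_int (starRingEnd (QuadraticAlgebra R a b)) hz)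

end QuadraticAlgebra

section QuadraticIrrational

variable {α : ℝ} {a b : ℚ}

lemma forall_sq_ne_of_irrational (hα : Irrational α) (h : α * α = a • (1 : ℝ) + b • α) (r : ℚ) :
    r ^ 2 ≠ a + b * r := by
  intro hr
  have hr' : (r : ℝ) ^ 2 = a + b * r := by exact_mod_cast hr
  have hprod : (α - r) * (α - (b - r : ℚ)) = 0 := by
    simp only [Rat.smul_def, mul_one] at h
    push_cast
    linear_combination h - hr'
  rcases mul_eq_zero.1 hprod with h0 | h0
  · exact hα.ne_rat r (sub_eq_zero.1 h0)
  · exact hα.ne_rat (b - r) (sub_eq_zero.1 h0)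

lemma quadraticAlgebra_lift_injective (hα : Irrational α) (h : α * α = a • (1 : ℝ) + b • α) :
    Function.Injective (QuadraticAlgebra.lift ⟨α, h⟩) := by
  rw [injective_iff_map_eq_zero]
  intro z hz
  have hz' : (z.im : ℝ) * α = (-z.re : ℚ) := by
    simp only [QuadraticAlgebra.lift_apply_apply, Rat.smul_def, mul_one] at hz
    push_cast
    linear_combination hz
  have him : z.im = 0 := by
    by_contra hne
    exact (hα.ratCast_mul hne).ne_rat _ hz'
  have hre : z.re = 0 := by simpa [him] using hz'.symm
  exact QuadraticAlgebra.ext hre him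

lemma closure_singleton_subset_range_lift (hα : Irrational α)
    (h : α * α = a • (1 : ℝ) + b • α) :
    (Subfield.closure {α} : Set ℝ) ⊆ Set.range (QuadraticAlgebra.lift ⟨α, h⟩) := by
  have : Fact (∀ r, r ^ 2 ≠ a + b * r) := ⟨forall_sq_ne_of_irrational hα h⟩
  have hle : Subfield.closure {α} ≤
      (QuadraticAlgebra.lift ⟨α, h⟩).toRingHom.fieldRange := by
    rw [Subfield.closure_le, Set.singleton_subset_iff]
    exact ⟨QuadraticAlgebra.omega, by simp⟩
  exact hle

lemma exists_isIntegral_lift_eq (hα : Irrational α) (h : α * α = a • (1 : ℝ) + b • α) {x : ℝ}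
    (hx : x ∈ ringOfIntegers (Subfield.closure {α})) :
    ∃ z : QuadraticAlgebra ℚ a b, IsIntegral ℤ z ∧ QuadraticAlgebra.lift ⟨α, h⟩ z = x := by
  obtain ⟨hx_int, hx_mem⟩ := Subring.mem_inf.1 hx
  obtain ⟨z, rfl⟩ := closure_singleton_subset_range_lift hα h hx_mem
  exact ⟨z, (isIntegral_algHom_iff (QuadraticAlgebra.lift ⟨α, h⟩).toRingHom.toIntAlgHom
    (quadraticAlgebra_lift_injective hα h)).1 hx_int, rfl⟩

lemma IsUnitOf.exists_isUnit_sq_eq (hα : Irrational α) (h : α * α = a • (1 : ℝ) + b • α) {x : ℝ}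
    (hx : IsUnitOf (ringOfIntegers (Subfield.closure {α})) x) :
    ∃ t N : ℤ, IsUnit N ∧ x ^ 2 = t * x - N := by
  obtain ⟨hxO, y, hyO, hxy⟩ := hx
  obtain ⟨z, hz, rfl⟩ := exists_isIntegral_lift_eq hα h hxO
  obtain ⟨w, hw, rfl⟩ := exists_isIntegral_lift_eq hα h hyO
  obtain ⟨t, ht⟩ := IsIntegrallyClosed.isIntegral_iff.1 (isIntegral_quadraticAlgebra_trace hz)
  obtain ⟨N, hN⟩ := IsIntegrallyClosed.isIntegral_iff.1 (isIntegral_quadraticAlgebra_norm hz)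
  obtain ⟨N', hN'⟩ := IsIntegrallyClosed.isIntegral_iff.1 (isIntegral_quadraticAlgebra_norm hw)
  have hzw : z * w = 1 :=
    quadraticAlgebra_lift_injective hα h (by rw [map_mul, map_one, hxy])
  have hNN' : N * N' = 1 := by
    have : (N : ℚ) * N' = 1 := by
      simpa [← hN, ← hN'] using congrArg QuadraticAlgebra.norm hzw
    exact_mod_cast this
  refine ⟨t, N, .of_mul_eq_one N' hNN', ?_⟩
  rw [← map_pow, QuadraticAlgebra.sq_eq_trace_smul_sub_norm, ← ht, ← hN, map_sub, map_smul,
    AlgHom.commutes]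
  simp only [eq_intCast, eq_ratCast, Rat.smul_def, Rat.cast_intCast]

end QuadraticIrrational

lemma eq_add_sqrt_div_two_of_sq_eq {x t N : ℝ} (hx : 1 ≤ x) (hN : N ≤ 1)
    (h : x ^ 2 = t * x - N) : x = (t + √(t ^ 2 - 4 * N)) / 2 := by
  have hle : t ≤ 2 * x := by nlinarith
  have hdiscrim : t ^ 2 - 4 * N = (2 * x - t) ^ 2 := by linear_combination -4 * h
  rw [hdiscrim, Real.sqrt_sq (sub_nonneg.2 hle)]
  ring

lemma finite_setOf_isUnitOf_one_lt_le {O : Subring ℝ}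
    (hO : ∀ x, IsUnitOf O x → ∃ t N : ℤ, IsUnit N ∧ x ^ 2 = t * x - N) (y : ℝ) :
    {x | (IsUnitOf O x ∧ 1 < x) ∧ x ≤ y}.Finite := by
  refine .subset (.image (fun p : ℤ × ℤ ↦ ((p.1 : ℝ) + √(p.1 ^ 2 - 4 * p.2)) / 2)
    ((Set.finite_Icc 0 ⌈y + 1⌉).prod (Set.finite_Icc (-1) 1))) ?_
  rintro x ⟨⟨hx, hx_one⟩, hxy⟩
  obtain ⟨t, N, hN, h⟩ := hO x hx
  obtain ⟨hN_ge, hN_le⟩ : -1 ≤ N ∧ N ≤ 1 := by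
    rcases Int.isUnit_iff.1 hN with rfl | rfl <;> simp
  have hN_ge' : (-1 : ℝ) ≤ N := by exact_mod_cast hN_ge
  have hN_le' : (N : ℝ) ≤ 1 := by exact_mod_cast hN_le
  -- `t = x + N / x` with `|N / x| < 1`, which bounds the trace.
  have ht_pos : (0 : ℝ) < t := by nlinarith
  have ht_le : (t : ℝ) ≤ y + 1 := by nlinarith
  exact ⟨(t, N), ⟨⟨by exact_mod_cast ht_pos.le, Int.cast_le.1 (ht_le.trans (Int.le_ceil _))⟩,
    hN_ge, hN_le⟩, (eq_add_sqrt_div_two_of_sq_eq hx_one.le hN_le' h).symm⟩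

lemma exists_isLeast_isUnitOf_one_lt {O : Subring ℝ}
    (hO : ∀ x, IsUnitOf O x → ∃ t N : ℤ, IsUnit N ∧ x ^ 2 = t * x - N)
    (hne : ∃ x, IsUnitOf O x ∧ 1 < x) : ∃ e, IsLeast {x | IsUnitOf O x ∧ 1 < x} e := by
  obtain ⟨y, hy⟩ := hne
  obtain ⟨e, ⟨he, hey⟩, he_min⟩ :=
    (finite_setOf_isUnitOf_one_lt_le hO y).isCompact.exists_isLeast ⟨y, hy, le_rfl⟩
  refine ⟨e, he, fun x hx ↦ ?_⟩
  rcases le_total x y with hxy | hyx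
  · exact he_min ⟨hx, hxy⟩
  · exact hey.trans hyx

lemma exists_eq_add_mul_of_mem_closure_isUnitOf {O : Subring ℝ} {e x : ℝ} {t N : ℤ}
    (he : IsLeast {y | IsUnitOf O y ∧ 1 < y} e) (hN : IsUnit N) (h : e ^ 2 = t * e - N)
    (hx : x ∈ AddSubgroup.closure {y | IsUnitOf O y}) : ∃ p q : ℤ, x = p + q * e := by
  have h' : e * e = (-N) • (1 : ℝ) + t • e := by
    simp only [zsmul_eq_mul]
    push_cast
    linear_combination h
  have homega : IsUnit (QuadraticAlgebra.omega : QuadraticAlgebra ℤ (-N) t) := by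
    simpa [QuadraticAlgebra.isUnit_iff_norm_isUnit, QuadraticAlgebra.norm_def] using hN
  have heM := isUnitOf_range_of_isUnit (QuadraticAlgebra.lift ⟨e, h'⟩).toRingHom homega
  obtain ⟨z, rfl⟩ := closure_isUnitOf_le_of_isLeast he (by simpa using heM) hx
  exact ⟨z.re, z.im, by simp⟩

lemma irrational_sqrt_of_squarefree {D : ℤ} (hD : 1 < D) (hsf : Squarefree D) :
    Irrational √(D : ℝ) := by
  refine irrational_sqrt_intCast_iff.2 ⟨?_, by lia⟩
  rintro ⟨k, rfl⟩
  exact hD.ne' (Int.isUnit_mul_self (hsf k dvd_rfl))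

lemma isIntegral_sqrt_intCast (D : ℤ) : IsIntegral ℤ √(D : ℝ) := by
  refine .of_pow two_pos ?_
  rw [Real.sq_sqrt']
  exact_mod_cast isIntegral_algebraMap (R := ℤ) (A := ℝ) (x := max D 0)

lemma sqrt_intCast_mem_ringOfIntegers (D : ℤ) :
    √(D : ℝ) ∈ ringOfIntegers (Subfield.closure {√(D : ℝ)}) :=
  Subring.mem_inf.2 ⟨isIntegral_sqrt_intCast D, Subfield.subset_closure rfl⟩

lemma sq_mul_discrim_eq_of_sqrt_eq {D p q t N : ℤ} {e : ℝ} (hD : Irrational √D)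
    (he : e ^ 2 = t * e - N) (h : √D = p + q * e) : q ^ 2 * (t ^ 2 - 4 * N) = 4 * D := by
  have hD0 : 0 ≤ D := (irrational_sqrt_intCast_iff.1 hD).2
  have hsq : √(D : ℝ) ^ 2 = D := Real.sq_sqrt (by exact_mod_cast hD0)
  have hlin : ((2 * p + q * t : ℤ) : ℝ) * √D = (D + p ^ 2 + q * t * p + q ^ 2 * N : ℤ) := by
    push_cast
    linear_combination hsq - q ^ 2 * he + (2 * p + q * t) * h - (√(D : ℝ) + p + q * e) * h
  have hcoeff : 2 * p + q * t = 0 := by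
    by_contra hne
    exact (hD.intCast_mul hne).ne_int _ hlin
  have hconst : D + p ^ 2 + q * t * p + q ^ 2 * N = 0 := by
    rw [hcoeff, Int.cast_zero, zero_mul] at hlin
    exact_mod_cast hlin.symm
  linear_combination (2 * p + q * t) * hcoeff - 4 * hconst

lemma eq_or_exists_eq_sq_sub_of_squarefree {D q t N : ℤ} (hD : Squarefree D)
    (h : q ^ 2 * (t ^ 2 - 4 * N) = 4 * D) : D = t ^ 2 - 4 * N ∨ ∃ m, D = m ^ 2 - N := by
  have sq_eq_one {n : ℤ} (hn : n * n ∣ D) : n ^ 2 = 1 := Int.isUnit_sq (hD n hn)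
  rcases q.even_or_odd' with ⟨k, rfl | rfl⟩
  · have hk : k ^ 2 * (t ^ 2 - 4 * N) = D := by linarith
    left
    rw [← hk, sq_eq_one ⟨t ^ 2 - 4 * N, by rw [← hk]; ring⟩, one_mul]
  · right
    have hcop : IsCoprime ((2 * k + 1) * (2 * k + 1)) 4 :=
      ⟨1, -(k ^ 2 + k), by ring⟩
    have hq := sq_eq_one (hcop.dvd_of_dvd_mul_left ⟨t ^ 2 - 4 * N, by rw [← h]; ring⟩)
    rw [hq, one_mul] at h
    obtain ⟨m, rfl⟩ : Even t := by
      have : Even (t ^ 2) := ⟨2 * (D + N), by linarith⟩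
      exact (Int.even_pow.1 this).1
    exact ⟨m, by linarith⟩

lemma ne_zero_of_squarefree_of_eq_sq_add {D m r : ℤ} (hD : 1 < D) (hsf : Squarefree D)
    (hr : r = 1 ∨ r = -1 ∨ r = 4 ∨ r = -4) (h : D = m ^ 2 + r) : m ≠ 0 := by
  rintro rfl
  obtain rfl : D = 4 := by lia
  have h_two : IsUnit (2 : ℤ) := hsf 2 (by norm_num)
  simp [Int.isUnit_iff] at h_two

theorem maximal_unitGenerated_narrowRichaudDegert_general {D : ℤ} (hD : 1 < D)
    (hsf : Squarefree D)
    (hsqrt : √(D : ℝ) ∈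
      AddSubgroup.closure {x | IsUnitOf (ringOfIntegers (Subfield.closure {√(D : ℝ)})) x}) :
    ∃ m r : ℤ, 1 ≤ m ∧ (r = 1 ∨ r = -1 ∨ r = 4 ∨ r = -4) ∧ D = m ^ 2 + r := by
  have hirr : Irrational √(D : ℝ) := irrational_sqrt_of_squarefree hD hsf
  have hquad : √(D : ℝ) * √(D : ℝ) = (D : ℚ) • (1 : ℝ) + (0 : ℚ) • √(D : ℝ) := by
    rw [Real.mul_self_sqrt (by exact_mod_cast hD.le.trans' zero_le_one)]
    simp [Rat.smul_def]
  have hunits := fun x (hx : IsUnitOf _ x) ↦ hx.exists_isUnit_sq_eq hirr hquad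
  obtain ⟨e, he⟩ := exists_isLeast_isUnitOf_one_lt hunits
    (exists_isUnitOf_one_lt_of_irrational_mem_closure hirr hsqrt)
  obtain ⟨t, N, hN, he_sq⟩ := hunits e he.1.1
  obtain ⟨p, q, hpq⟩ := exists_eq_add_mul_of_mem_closure_isUnitOf he hN he_sq hsqrt
  obtain ⟨m, r, hr, hmr⟩ : ∃ m r : ℤ, (r = 1 ∨ r = -1 ∨ r = 4 ∨ r = -4) ∧ D = m ^ 2 + r := by
    have hN' := Int.isUnit_iff.1 hN
    rcases eq_or_exists_eq_sq_sub_of_squarefree hsf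
      (sq_mul_discrim_eq_of_sqrt_eq hirr he_sq hpq) with h | ⟨m, h⟩
    · exact ⟨t, -4 * N, by lia, by lia⟩
    · exact ⟨m, -N, by lia, by lia⟩
  exact ⟨|m|, r, Int.one_le_abs (ne_zero_of_squarefree_of_eq_sq_add hD hsf hr hmr), hr,
    by rwa [sq_abs]⟩

/-- If the ring of integers (maximal order) of a real quadratic field `K = ℚ(√D₀)` (with
`D₀ > 1` squarefree, the fundamental radicand) is unit-generated, then `K` is of narrow
Richaud–Degert type: `D₀ = m² + r` for some `m ≥ 1` and `r ∈ {1, -1, 4, -4}`. -/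
theorem maximal_unitGenerated_narrowRichaudDegert (K : Subfield ℝ)
    (hK : IsRealQuadratic K)
    (hug : IsUnitGenerated (ringOfIntegers K))
    (D₀ : ℤ) (hD₀ : 1 < D₀) (hsf : Squarefree D₀)
    (hKD : K = Subfield.closure {Real.sqrt D₀}) :
    ∃ m r : ℤ, 1 ≤ m ∧ (r = 1 ∨ r = -1 ∨ r = 4 ∨ r = -4) ∧ D₀ = m ^ 2 + r := by
  subst hKD
  exact maximal_unitGenerated_narrowRichaudDegert_general hD₀ hsf
    (hug.ge (sqrt_intCast_mem_ringOfIntegers D₀))
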